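/- Let π be a prior density on the open simplex Θ_k bounded above by B, continuous almost everywhere with respect to Lebesgue measure. Define m_n*(r) = n^k · m_{T_n}(n(r)) where n(r) has coordinates ⌊n r_i + 1/2⌋ and m_{T_n} is the prior predictive probability function of the multinomial counts. Then m_n*(r) → π(r) as n → ∞ for Lebesgue-almost every r. -/

import Mathlib

open Finset MeasureTheory Filter Topology Nat

/-- The open simplex `Θ_k ⊆ ℝ^k` of the first `k` probabilities. -/
def openSimplex (k : ℕ) : Set (Fin k → ℝ) :=
  {θ | (∀ i, 0 < θ i) ∧ ∑ i, θ i < 1}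

/-- The prior predictive probability function of the multinomial counts
`t : Fin k → ℕ` (the count of the last category being `n - ∑ t`), for a prior
density `π` on `Θ_k`. -/
noncomputable def priorPred (k : ℕ) (π : (Fin k → ℝ) → ℝ) (n : ℕ)
    (t : Fin k → ℕ) : ℝ :=
  ((n ! : ℝ) / ((∏ i, (t i)!) * (n - ∑ i, t i)!)) *
    ∫ θ in openSimplex k,
      ((∏ i, θ i ^ t i) * (1 - ∑ i, θ i) ^ (n - ∑ i, t i)) * π θ

/-- The rounded count vector `n(r)` with coordinates `⌊n r_i + 1/2⌋` (as naturals). -/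
noncomputable def roundCount (k : ℕ) (n : ℕ) (r : Fin k → ℝ) : Fin k → ℕ :=
  fun i => (⌊(n : ℝ) * r i + 1 / 2⌋).toNat

/-- The continuized prior predictive density
`m_n*(r) = n^k · m_{T_n}(n(r))` (zero when `n(r)` is not a valid count vector). -/
noncomputable def mStar (k : ℕ) (π : (Fin k → ℝ) → ℝ) (n : ℕ) (r : Fin k → ℝ) : ℝ :=
  (n : ℝ) ^ k *
    (if (∀ i, (0 : ℤ) ≤ ⌊(n : ℝ) * r i + 1 / 2⌋) ∧ ∑ i, roundCount k n r i ≤ n then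
      priorPred k π n (roundCount k n r)
    else 0)

/-! The multinomial likelihood of the counts `t` is, up to normalization, the density of the
Dirichlet distribution with parameters `t + 1`; thus `m_n*(r)` is `n ^ k * n! / (n + k)!` times the
expectation of `π` under that distribution. Its mean is close to `t / n`, hence to `r`, and its
variance tends to zero, so it concentrates at `r` and its expectations of bounded functions
continuous at `r` converge. Chebyshev's inequality replaces any uniform estimate of the density. -/

section Concentration

variable {X E : Type*} [NormedAddCommGroup E] {s : Set X} {f : X → E} {w : X → ℝ} {B : ℝ}

lemma exists_norm_sub_le_add_mul_of_continuousWithinAt [TopologicalSpace X] {x₀ : X}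
    (hw₀ : ∀ x ∈ s, 0 ≤ w x) (hw : ∀ U ∈ 𝓝 x₀, ∃ c > 0, ∀ x ∉ U, c ≤ w x)
    (hfB : ∀ x ∈ s, ‖f x‖ ≤ B) (hf : ContinuousWithinAt f s x₀) {ε : ℝ} (hε : 0 < ε) :
    ∃ C, ∀ x ∈ s, ‖f x - f x₀‖ ≤ ε + C * w x := by
  obtain ⟨U, hU, hUf⟩ : ∃ U ∈ 𝓝 x₀, ∀ x ∈ U ∩ s, ‖f x - f x₀‖ < ε := by
    have hnear := Metric.tendsto_nhds.1 hf ε hε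
    simp only [dist_eq_norm] at hnear
    exact mem_nhdsWithin_iff_exists_mem_nhds_inter.1 hnear
  obtain ⟨c, hc, hcw⟩ := hw U hU
  refine ⟨(B + ‖f x₀‖) / c, fun x hx => ?_⟩
  have hB : 0 ≤ B + ‖f x₀‖ := add_nonneg ((norm_nonneg _).trans (hfB x hx)) (norm_nonneg _)
  by_cases hxU : x ∈ U
  · exact (hUf x ⟨hxU, hx⟩).le.trans
      (le_add_of_nonneg_right (mul_nonneg (div_nonneg hB hc.le) (hw₀ x hx)))
  · calc ‖f x - f x₀‖ ≤ ‖f x‖ + ‖f x₀‖ := norm_sub_le _ _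
      _ ≤ B + ‖f x₀‖ := by gcongr; exact hfB x hx
      _ = (B + ‖f x₀‖) / c * c := (div_mul_cancel₀ _ hc.ne').symm
      _ ≤ (B + ‖f x₀‖) / c * w x := by gcongr; exact hcw x hxU
      _ ≤ ε + (B + ‖f x₀‖) / c * w x := le_add_of_nonneg_left hε.le

variable [NormedSpace ℝ E] [CompleteSpace E] [MeasurableSpace X] {μ : Measure X}

lemma norm_setIntegral_smul_sub_le {K : X → ℝ} {ε C : ℝ} (hs : MeasurableSet s)
    (hK₀ : ∀ x ∈ s, 0 ≤ K x) (hK : IntegrableOn K s μ)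
    (hKw : IntegrableOn (fun x => K x * w x) s μ) (hfm : AEStronglyMeasurable f (μ.restrict s))
    (hfB : ∀ x ∈ s, ‖f x‖ ≤ B) {y : E} (hfy : ∀ x ∈ s, ‖f x - y‖ ≤ ε + C * w x) :
    ‖∫ x in s, K x • f x ∂μ - (∫ x in s, K x ∂μ) • y‖ ≤
      ε * ∫ x in s, K x ∂μ + C * ∫ x in s, K x * w x ∂μ := by
  have hKf : IntegrableOn (fun x => K x • f x) s μ :=
    hK.smul_bdd B hfm ((ae_restrict_iff' hs).2 (Eventually.of_forall hfB))
  have hbound : ∀ x ∈ s, ‖K x • f x - K x • y‖ ≤ ε * K x + C * (K x * w x) := fun x hx =>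
    calc ‖K x • f x - K x • y‖ = K x * ‖f x - y‖ := by
          rw [← smul_sub, norm_smul, Real.norm_of_nonneg (hK₀ x hx)]
      _ ≤ K x * (ε + C * w x) := mul_le_mul_of_nonneg_left (hfy x hx) (hK₀ x hx)
      _ = ε * K x + C * (K x * w x) := by ring
  rw [← integral_smul_const, ← integral_sub hKf (hK.smul_const y), ← integral_const_mul,
    ← integral_const_mul, ← integral_add (hK.const_mul ε) (hKw.const_mul C)]
  exact norm_integral_le_of_norm_le ((hK.const_mul ε).add (hKw.const_mul C))
    ((ae_restrict_iff' hs).2 (Eventually.of_forall hbound))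

theorem tendsto_setIntegral_smul_of_concentrating [TopologicalSpace X] {x₀ : X} {ι : Type*}
    {l : Filter ι} {K : ι → X → ℝ} (hs : MeasurableSet s) (hw₀ : ∀ x ∈ s, 0 ≤ w x)
    (hw : ∀ U ∈ 𝓝 x₀, ∃ c > 0, ∀ x ∉ U, c ≤ w x) (hK₀ : ∀ a, ∀ x ∈ s, 0 ≤ K a x)
    (hK : ∀ a, IntegrableOn (K a) s μ) (hKw : ∀ a, IntegrableOn (fun x => K a x * w x) s μ)
    (hmass : Tendsto (fun a => ∫ x in s, K a x ∂μ) l (𝓝 1))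
    (hmoment : Tendsto (fun a => ∫ x in s, K a x * w x ∂μ) l (𝓝 0))
    (hfm : AEStronglyMeasurable f (μ.restrict s)) (hfB : ∀ x ∈ s, ‖f x‖ ≤ B)
    (hf : ContinuousWithinAt f s x₀) :
    Tendsto (fun a => ∫ x in s, K a x • f x ∂μ) l (𝓝 (f x₀)) := by
  have hdiff : Tendsto
      (fun a => ∫ x in s, K a x • f x ∂μ - (∫ x in s, K a x ∂μ) • f x₀) l (𝓝 0) := by
    rw [Metric.tendsto_nhds]
    intro ε hε
    obtain ⟨C, hC⟩ := exists_norm_sub_le_add_mul_of_continuousWithinAt hw₀ hw hfB hf (half_pos hε)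
    have hbound : Tendsto
        (fun a => ε / 2 * ∫ x in s, K a x ∂μ + C * ∫ x in s, K a x * w x ∂μ) l (𝓝 (ε / 2)) := by
      simpa using (hmass.const_mul (ε / 2)).add (hmoment.const_mul C)
    filter_upwards [hbound.eventually_lt_const (half_lt_self hε)] with a ha
    rw [_root_.dist_zero_right]
    exact (norm_setIntegral_smul_sub_le hs (hK₀ a) (hK a) (hKw a) hfm hfB hC).trans_lt ha
  simpa using hdiff.add (hmass.smul_const (f x₀))

end Concentration

section OpenSimplex

lemma isOpen_openSimplex (k : ℕ) : IsOpen (openSimplex k) := by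
  simp only [openSimplex, Set.ofPred_and, Set.ofPred_forall]
  exact (isOpen_iInter_of_finite fun i => isOpen_lt continuous_const (continuous_apply i)).inter
    (isOpen_lt (by fun_prop) continuous_const)

lemma openSimplex_subset_Icc (k : ℕ) : openSimplex k ⊆ Set.Icc 0 1 := fun _ hθ =>
  ⟨fun i => (hθ.1 i).le,
    fun i => (single_le_sum (fun j _ => (hθ.1 j).le) (mem_univ i)).trans hθ.2.le⟩

lemma integrableOn_openSimplex_of_continuous {E : Type*} [NormedAddCommGroup E] {k : ℕ}
    {f : (Fin k → ℝ) → E} (hf : Continuous f) : IntegrableOn f (openSimplex k) :=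
  (hf.continuousOn.integrableOn_compact isCompact_Icc).mono_set (openSimplex_subset_Icc k)

lemma cons_mem_openSimplex_iff {k : ℕ} {x : ℝ} {y : Fin k → ℝ} :
    (Fin.cons x y : Fin (k + 1) → ℝ) ∈ openSimplex (k + 1) ↔
      y ∈ openSimplex k ∧ x ∈ Set.Ioo 0 (1 - ∑ i, y i) := by
  simp only [openSimplex, Set.mem_ofPred_eq, Fin.forall_fin_succ, Fin.sum_univ_succ,
    Fin.cons_zero, Fin.cons_succ, Set.mem_Ioo]
  constructor
  · rintro ⟨⟨hx, hy⟩, hsum⟩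
    exact ⟨⟨hy, by linarith⟩, hx, by linarith⟩
  · rintro ⟨⟨hy, -⟩, hx, hsum⟩
    exact ⟨⟨hx, hy⟩, by linarith⟩

lemma setIntegral_openSimplex_succ {E : Type*} [NormedAddCommGroup E] [NormedSpace ℝ E] {k : ℕ}
    {f : (Fin (k + 1) → ℝ) → E} (hf : IntegrableOn f (openSimplex (k + 1))) :
    ∫ θ in openSimplex (k + 1), f θ =
      ∫ y in openSimplex k, ∫ x in Set.Ioo 0 (1 - ∑ i, y i), f (Fin.cons x y) := by
  have hmeas (m : ℕ) := (isOpen_openSimplex m).measurableSet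
  have hcons := (volume_preserving_piFinSuccAbove (fun _ : Fin (k + 1) => ℝ) 0).symm
  have hslice : ∀ (x : ℝ) (y : Fin k → ℝ),
      (openSimplex (k + 1)).indicator f
          ((MeasurableEquiv.piFinSuccAbove (fun _ : Fin (k + 1) => ℝ) 0).symm (x, y)) =
        (openSimplex k).indicator (fun y =>
          (Set.Ioo 0 (1 - ∑ i, y i)).indicator (fun x => f (Fin.cons x y)) x) y := fun x y => by
    have hxy : (MeasurableEquiv.piFinSuccAbove (fun _ : Fin (k + 1) => ℝ) 0).symm (x, y) =
        (Fin.cons x y : Fin (k + 1) → ℝ) := by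
      simp [MeasurableEquiv.piFinSuccAbove, Fin.consEquiv]
    classical
    simp only [hxy, Set.indicator_apply, cons_mem_openSimplex_iff, ite_and]
  have hint : Integrable (fun p => (openSimplex (k + 1)).indicator f
      ((MeasurableEquiv.piFinSuccAbove (fun _ : Fin (k + 1) => ℝ) 0).symm p)) :=
    (hcons.integrable_comp_emb (MeasurableEquiv.measurableEmbedding _)).2
      ((integrable_indicator_iff (hmeas _)).2 hf)
  rw [← integral_indicator (hmeas _), ← hcons.integral_comp', Measure.volume_eq_prod,
    integral_prod_symm _ hint, ← integral_indicator (hmeas _)]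
  refine integral_congr_ae (Eventually.of_forall fun y => ?_)
  simp only [hslice]
  by_cases hy : y ∈ openSimplex k
  · simp only [Set.indicator_of_mem hy, integral_indicator measurableSet_Ioo]
  · simp only [Set.indicator_of_notMem hy, integral_zero]

end OpenSimplex

section DirichletIntegral

lemma integral_pow_mul_sub_pow (a b : ℕ) {c : ℝ} (hc : 0 < c) :
    ∫ x in (0 : ℝ)..c, x ^ a * (c - x) ^ b = (a ! : ℝ) * b ! / (a + b + 1)! * c ^ (a + b + 1) := by
  have hscaled := Complex.betaIntegral_scaled (a + 1) (b + 1) hc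
  have hGamma : Complex.betaIntegral (a + 1) (b + 1) = (a ! : ℂ) * b ! / (a + b + 1)! := by
    have hsum : (a + 1 + (b + 1) : ℂ) = (a + b + 1 : ℕ) + 1 := by push_cast; ring
    have hre : ∀ m : ℕ, 0 < (m + 1 : ℂ).re := fun m => by exact_mod_cast m.succ_pos
    rw [Complex.betaIntegral_eq_Gamma_mul_div _ _ (hre a) (hre b), hsum,
      Complex.Gamma_nat_eq_factorial, Complex.Gamma_nat_eq_factorial,
      Complex.Gamma_nat_eq_factorial]
  have hexp : (a + 1 + (b + 1) - 1 : ℂ) = (a + b + 1 : ℕ) := by push_cast; ring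
  rw [hGamma, hexp, Complex.cpow_natCast] at hscaled
  simp only [add_sub_cancel_right, Complex.cpow_natCast] at hscaled
  rw [mul_comm (_ / _), ← Complex.ofReal_inj, ← intervalIntegral.integral_ofReal]
  push_cast
  exact hscaled

theorem integral_openSimplex_prod_pow_mul_pow (k : ℕ) (t : Fin k → ℕ) (s : ℕ) :
    ∫ θ in openSimplex k, (∏ i, θ i ^ t i) * (1 - ∑ i, θ i) ^ s =
      (∏ i, ((t i)! : ℝ)) * s ! / (∑ i, t i + s + k)! := by
  induction k generalizing s with
  | zero =>
    have huniv : openSimplex 0 = Set.univ := by ext; simp [openSimplex]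
    simp [huniv, Measure.real, volume_pi, Nat.factorial_ne_zero]
  | succ k ih =>
    have hinner : ∀ y ∈ openSimplex k,
        ∫ x in Set.Ioo 0 (1 - ∑ i, y i), (∏ i, (Fin.cons x y : Fin (k + 1) → ℝ) i ^ t i) *
            (1 - ∑ i, (Fin.cons x y : Fin (k + 1) → ℝ) i) ^ s =
          ((t 0)! : ℝ) * s ! / (t 0 + s + 1)! *
            ((∏ i, y i ^ t i.succ) * (1 - ∑ i, y i) ^ (t 0 + s + 1)) := fun y hy => by
      have hpos : 0 < 1 - ∑ i, y i := sub_pos.2 hy.2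
      simp only [Fin.prod_univ_succ, Fin.sum_univ_succ, Fin.cons_zero, Fin.cons_succ,
        sub_add_eq_sub_sub_swap, mul_right_comm _ (∏ i, y i ^ t i.succ)]
      rw [integral_mul_const, ← integral_Ioc_eq_integral_Ioo,
        ← intervalIntegral.integral_of_le hpos.le, integral_pow_mul_sub_pow _ _ hpos]
      ring
    have htotal : ∑ i : Fin k, t i.succ + (t 0 + s + 1) + k =
        t 0 + ∑ i : Fin k, t i.succ + s + (k + 1) := by ring
    rw [setIntegral_openSimplex_succ (integrableOn_openSimplex_of_continuous (by fun_prop)),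
      setIntegral_congr_fun (isOpen_openSimplex k).measurableSet hinner, integral_const_mul, ih,
      Fin.prod_univ_succ, Fin.sum_univ_succ, htotal]
    field_simp [Nat.factorial_ne_zero]

end DirichletIntegral

lemma sum_add_single_one {ι : Type*} [Fintype ι] [DecidableEq ι] (t : ι → ℕ) (i : ι) :
    ∑ j, (t + Pi.single i 1 : ι → ℕ) j = ∑ j, t j + 1 := by
  simp [sum_add_distrib]

/-- The density on `openSimplex k` of the Dirichlet distribution with parameters
`t 0 + 1, …, t (k - 1) + 1, s + 1`, that is, the posterior density of the uniform prior after
observing the multinomial counts `t` and `s`, the latter for the last category. -/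
noncomputable def dirichletDensity {k : ℕ} (t : Fin k → ℕ) (s : ℕ) (θ : Fin k → ℝ) : ℝ :=
  (∑ i, t i + s + k)! / ((∏ i, ((t i)! : ℝ)) * s !) * ((∏ i, θ i ^ t i) * (1 - ∑ i, θ i) ^ s)

namespace dirichletDensity

variable {k : ℕ} (t : Fin k → ℕ) (s : ℕ)

@[fun_prop]
lemma continuous : Continuous (dirichletDensity t s) := by
  unfold dirichletDensity
  fun_prop

lemma nonneg {θ : Fin k → ℝ} (hθ : θ ∈ openSimplex k) : 0 ≤ dirichletDensity t s θ := by
  have hprod : 0 ≤ ∏ i, θ i ^ t i := prod_nonneg fun i _ => pow_nonneg (hθ.1 i).le _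
  have hlast : 0 ≤ 1 - ∑ i, θ i := sub_nonneg.2 hθ.2.le
  unfold dirichletDensity
  positivity

lemma integral_eq_one : ∫ θ in openSimplex k, dirichletDensity t s θ = 1 := by
  have hprod : ∏ i, ((t i)! : ℝ) ≠ 0 := prod_ne_zero_iff.2 fun i _ => by positivity
  simp only [dirichletDensity, integral_const_mul, integral_openSimplex_prod_pow_mul_pow]
  field_simp

/-- Multiplying by a coordinate raises the corresponding parameter by one, so all moments follow
from `integral_eq_one`. -/
lemma mul_coord (i : Fin k) (θ : Fin k → ℝ) :
    dirichletDensity t s θ * θ i = (t i + 1) / (∑ j, (t j : ℝ) + s + k + 1) *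
      dirichletDensity (t + Pi.single i 1) s θ := by
  have hpow : ∏ j, θ j ^ (t + Pi.single i 1 : Fin k → ℕ) j = (∏ j, θ j ^ t j) * θ i := by
    simp only [Pi.add_apply, pow_add, prod_mul_distrib, Pi.single_apply, pow_ite, pow_one,
      pow_zero, prod_ite_eq', mem_univ, if_true]
  have hfactorial : ∏ j, (((t + Pi.single i 1 : Fin k → ℕ) j)! : ℝ) =
      (∏ j, ((t j)! : ℝ)) * (t i + 1) := by
    have hother : ∀ j ∈ univ.erase i, (((t + Pi.single i 1 : Fin k → ℕ) j)! : ℝ) = (t j)! :=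
      fun j hj => by rw [Pi.add_apply, Pi.single_eq_of_ne (ne_of_mem_erase hj), add_zero]
    rw [← mul_prod_erase _ _ (mem_univ i), prod_congr rfl hother,
      ← mul_prod_erase _ (fun j => ((t j)! : ℝ)) (mem_univ i), Pi.add_apply, Pi.single_eq_same,
      Nat.factorial_succ]
    push_cast
    ring
  have htotal : ∑ j, (t + Pi.single i 1 : Fin k → ℕ) j + s + k = (∑ j, t j + s + k) + 1 := by
    rw [sum_add_single_one]
    ring
  have hprod : ∏ j, ((t j)! : ℝ) ≠ 0 := prod_ne_zero_iff.2 fun j _ => by positivity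
  simp only [dirichletDensity, hpow, hfactorial, htotal, Nat.factorial_succ]
  push_cast
  field_simp

lemma integral_mul_coord (i : Fin k) :
    ∫ θ in openSimplex k, dirichletDensity t s θ * θ i =
      (t i + 1) / (∑ j, (t j : ℝ) + s + k + 1) := by
  simp only [mul_coord, integral_const_mul, integral_eq_one, mul_one]

lemma integral_mul_coord_sq (i : Fin k) :
    ∫ θ in openSimplex k, dirichletDensity t s θ * θ i ^ 2 =
      (t i + 1) / (∑ j, (t j : ℝ) + s + k + 1) *
        ((t i + 2) / (∑ j, (t j : ℝ) + s + k + 2)) := by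
  have htotal : ∑ j, ((t + Pi.single i 1 : Fin k → ℕ) j : ℝ) = ∑ j, (t j : ℝ) + 1 := by
    exact_mod_cast sum_add_single_one t i
  have hnext := integral_mul_coord (t + Pi.single i 1) s i
  simp only [sq, ← mul_assoc, mul_coord t]
  simp only [mul_assoc, integral_const_mul, hnext]
  rw [htotal, Pi.add_apply, Pi.single_eq_same]
  push_cast
  ring_nf

lemma integral_mul_sum_sub_sq (r : Fin k → ℝ) :
    ∫ θ in openSimplex k, dirichletDensity t s θ * ∑ i, (θ i - r i) ^ 2 =
      ∑ i, ((t i + 1) / (∑ j, (t j : ℝ) + s + k + 1) *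
          ((t i + 2) / (∑ j, (t j : ℝ) + s + k + 2)) -
        2 * r i * ((t i + 1) / (∑ j, (t j : ℝ) + s + k + 1)) + r i ^ 2) := by
  have hexpand : ∀ (i : Fin k) (θ : Fin k → ℝ), dirichletDensity t s θ * (θ i - r i) ^ 2 =
      dirichletDensity t s θ * θ i ^ 2 - 2 * r i * (dirichletDensity t s θ * θ i) +
        r i ^ 2 * dirichletDensity t s θ := fun i θ => by ring
  have hint : ∀ {g : (Fin k → ℝ) → ℝ}, Continuous g → IntegrableOn g (openSimplex k) :=
    integrableOn_openSimplex_of_continuous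
  simp only [mul_sum]
  rw [integral_finsetSum _ fun i _ => hint (by fun_prop)]
  refine sum_congr rfl fun i _ => ?_
  simp only [hexpand]
  rw [integral_add (hint (by fun_prop)) (hint (by fun_prop)),
    integral_sub (hint (by fun_prop)) (hint (by fun_prop)), integral_const_mul,
    integral_const_mul, integral_eq_one, integral_mul_coord, integral_mul_coord_sq, mul_one]

end dirichletDensity

section Limits

lemma tendsto_pow_mul_factorial_div_factorial_add (k : ℕ) :
    Tendsto (fun n : ℕ => (n : ℝ) ^ k * n ! / (n + k)!) atTop (𝓝 1) := by
  induction k with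
  | zero => exact tendsto_const_nhds.congr fun n => by simp [Nat.factorial_ne_zero]
  | succ k ih =>
    have hstep := ih.mul (tendsto_natCast_div_add_atTop ((k : ℝ) + 1))
    rw [one_mul] at hstep
    refine hstep.congr fun n => ?_
    rw [← add_assoc n, Nat.factorial_succ]
    push_cast
    field_simp
    ring

lemma tendsto_add_div_add_of_tendsto_div {ι : Type*} {l : Filter ι} {x N : ι → ℝ} {r : ℝ}
    (hN : Tendsto N l atTop) (hx : Tendsto (fun a => x a / N a) l (𝓝 r)) (b c : ℝ) :
    Tendsto (fun a => (x a + b) / (N a + c)) l (𝓝 r) := by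
  have hnum : Tendsto (fun a => x a / N a + b / N a) l (𝓝 r) := by
    simpa using hx.add (hN.const_div_atTop b)
  have hden : Tendsto (fun a => 1 + c / N a) l (𝓝 1) := by
    simpa using (hN.const_div_atTop c).const_add 1
  have hquot : Tendsto (fun a => (x a / N a + b / N a) / (1 + c / N a)) l (𝓝 r) := by
    have hdiv := hnum.div hden one_ne_zero
    rwa [div_one] at hdiv
  refine hquot.congr' ?_
  filter_upwards [hN.eventually_ne_atTop 0] with a ha
  rw [← add_div, one_add_div ha, div_div_div_cancel_right₀ ha]

lemma exists_pos_forall_notMem_le_sum_sub_sq {ι : Type*} [Fintype ι] (r : ι → ℝ)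
    {U : Set (ι → ℝ)} (hU : U ∈ 𝓝 r) : ∃ c > 0, ∀ θ ∉ U, c ≤ ∑ i, (θ i - r i) ^ 2 := by
  obtain ⟨δ, hδ, hball⟩ := Metric.mem_nhds_iff.1 hU
  refine ⟨δ ^ 2, by positivity, fun θ hθ => ?_⟩
  obtain ⟨i, hi⟩ : ∃ i, δ ≤ |θ i - r i| := by
    by_contra! hlt
    exact hθ (hball ((dist_pi_lt_iff hδ).2 hlt))
  calc δ ^ 2 ≤ |θ i - r i| ^ 2 := by gcongr
    _ = (θ i - r i) ^ 2 := sq_abs _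
    _ ≤ ∑ i, (θ i - r i) ^ 2 := single_le_sum (f := fun i => (θ i - r i) ^ 2)
        (fun j _ => sq_nonneg _) (mem_univ i)

variable {ι E : Type*} [NormedAddCommGroup E] [NormedSpace ℝ E] [CompleteSpace E] {l : Filter ι}
  {k : ℕ} {t : ι → Fin k → ℕ} {s : ι → ℕ} {r : Fin k → ℝ}

lemma tendsto_integral_dirichletDensity_mul_sum_sub_sq
    (hN : Tendsto (fun a => ∑ j, (t a j : ℝ) + s a) l atTop)
    (ht : ∀ i, Tendsto (fun a => (t a i : ℝ) / (∑ j, (t a j : ℝ) + s a)) l (𝓝 (r i))) :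
    Tendsto (fun a => ∫ θ in openSimplex k,
      dirichletDensity (t a) (s a) θ * ∑ i, (θ i - r i) ^ 2) l (𝓝 0) := by
  have hmoment : ∀ (i : Fin k) (m : ℝ), Tendsto
      (fun a => (t a i + m) / (∑ j, (t a j : ℝ) + s a + k + m)) l (𝓝 (r i)) := fun i m => by
    simpa only [add_assoc] using tendsto_add_div_add_of_tendsto_div hN (ht i) m (k + m)
  have hlimit : ∑ i, (r i * r i - 2 * r i * r i + r i ^ 2) = 0 :=
    sum_eq_zero fun i _ => by ring
  simp only [dirichletDensity.integral_mul_sum_sub_sq]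
  rw [← hlimit]
  exact tendsto_finsetSum _ fun i _ => (((hmoment i 1).mul (hmoment i 2)).sub
    ((hmoment i 1).const_mul _)).add_const _

theorem tendsto_integral_dirichletDensity_smul {f : (Fin k → ℝ) → E} {B : ℝ}
    (hN : Tendsto (fun a => ∑ j, (t a j : ℝ) + s a) l atTop)
    (ht : ∀ i, Tendsto (fun a => (t a i : ℝ) / (∑ j, (t a j : ℝ) + s a)) l (𝓝 (r i)))
    (hfm : AEStronglyMeasurable f (volume.restrict (openSimplex k)))
    (hfB : ∀ θ ∈ openSimplex k, ‖f θ‖ ≤ B) (hf : ContinuousWithinAt f (openSimplex k) r) :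
    Tendsto (fun a => ∫ θ in openSimplex k, dirichletDensity (t a) (s a) θ • f θ) l
      (𝓝 (f r)) := by
  have hweight : Continuous fun θ : Fin k → ℝ => ∑ i, (θ i - r i) ^ 2 := by fun_prop
  have hmass : Tendsto (fun a => ∫ θ in openSimplex k, dirichletDensity (t a) (s a) θ) l
      (𝓝 1) := by
    simp only [dirichletDensity.integral_eq_one, tendsto_const_nhds]
  exact tendsto_setIntegral_smul_of_concentrating (isOpen_openSimplex k).measurableSet
    (fun θ _ => sum_nonneg fun i _ => sq_nonneg (θ i - r i))
    (fun _ hU => exists_pos_forall_notMem_le_sum_sub_sq r hU)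
    (fun a _ hθ => dirichletDensity.nonneg (t a) (s a) hθ)
    (fun a => integrableOn_openSimplex_of_continuous (dirichletDensity.continuous _ _))
    (fun a => integrableOn_openSimplex_of_continuous
      ((dirichletDensity.continuous _ _).mul hweight))
    hmass (tendsto_integral_dirichletDensity_mul_sum_sub_sq hN ht) hfm hfB hf

end Limits

section Rounding

/-- The rounded vector `n(r)` is a valid vector of multinomial counts: this is the condition under
which `mStar k π n r` is not set to zero. -/
def RoundsToCount (k n : ℕ) (r : Fin k → ℝ) : Prop :=
  (∀ i, (0 : ℤ) ≤ ⌊(n : ℝ) * r i + 1 / 2⌋) ∧ ∑ i, roundCount k n r i ≤ n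

variable {k : ℕ} {π : (Fin k → ℝ) → ℝ} {r : Fin k → ℝ} {l : Filter ℕ}

lemma pow_mul_priorPred_eq {n : ℕ} {t : Fin k → ℕ} (ht : ∑ i, t i ≤ n) :
    (n : ℝ) ^ k * priorPred k π n t = (n : ℝ) ^ k * n ! / (n + k)! *
      ∫ θ in openSimplex k, dirichletDensity t (n - ∑ i, t i) θ * π θ := by
  simp only [priorPred, dirichletDensity, mul_assoc, integral_const_mul, Nat.add_sub_cancel' ht]
  push_cast
  field_simp

lemma mStar_of_roundsToCount {n : ℕ} (h : RoundsToCount k n r) :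
    mStar k π n r = (n : ℝ) ^ k * n ! / (n + k)! * ∫ θ in openSimplex k,
      dirichletDensity (roundCount k n r) (n - ∑ i, roundCount k n r i) θ * π θ := by
  rw [← pow_mul_priorPred_eq h.2, mStar]
  exact congrArg _ (if_pos h)

lemma mStar_of_not_roundsToCount {n : ℕ} (h : ¬RoundsToCount k n r) : mStar k π n r = 0 :=
  (congrArg _ (if_neg h)).trans (mul_zero _)

lemma abs_roundCount_sub_le {n : ℕ} {i : Fin k} (h : (0 : ℤ) ≤ ⌊(n : ℝ) * r i + 1 / 2⌋) :
    |(roundCount k n r i : ℝ) - n * r i| ≤ 1 / 2 := by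
  have hcast : (roundCount k n r i : ℝ) = round ((n : ℝ) * r i) := by
    rw [round_eq]
    exact_mod_cast Int.toNat_of_nonneg h
  rw [hcast, abs_sub_comm]
  exact abs_sub_round _

lemma tendsto_roundCount_div (hl : l ≤ atTop) {i : Fin k}
    (h : ∀ᶠ n : ℕ in l, (0 : ℤ) ≤ ⌊(n : ℝ) * r i + 1 / 2⌋) :
    Tendsto (fun n : ℕ => (roundCount k n r i : ℝ) / n) l (𝓝 (r i)) := by
  have hn : Tendsto (fun n : ℕ => (n : ℝ)) l atTop := tendsto_natCast_atTop_atTop.mono_left hl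
  rw [tendsto_iff_dist_tendsto_zero]
  refine squeeze_zero' (Eventually.of_forall fun _ => dist_nonneg) ?_
    (hn.const_div_atTop (1 / 2))
  filter_upwards [h, hn.eventually_gt_atTop 0] with n hfloor hpos
  rw [Real.dist_eq, div_sub' hpos.ne', abs_div, abs_of_pos hpos]
  gcongr
  exact abs_roundCount_sub_le hfloor

lemma eventually_roundsToCount (hr : r ∈ openSimplex k) : ∀ᶠ n in atTop, RoundsToCount k n r := by
  have hfloor : ∀ (n : ℕ) i, (0 : ℤ) ≤ ⌊(n : ℝ) * r i + 1 / 2⌋ := fun n i =>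
    Int.floor_nonneg.2 (by have := (hr.1 i).le; positivity)
  have hsum : Tendsto (fun n : ℕ => ∑ i, (roundCount k n r i : ℝ) / n) atTop (𝓝 (∑ i, r i)) :=
    tendsto_finsetSum _ fun i _ =>
      tendsto_roundCount_div le_rfl (Eventually.of_forall fun n => hfloor n i)
  filter_upwards [hsum.eventually_lt_const hr.2, eventually_gt_atTop 0] with n hlt hn
  refine ⟨hfloor n, ?_⟩
  rw [← sum_div, div_lt_one (by exact_mod_cast hn)] at hlt
  exact_mod_cast hlt.le

lemma tendsto_mStar_of_eventually_roundsToCount {B : ℝ}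
    (hmeas : AEStronglyMeasurable π (volume.restrict (openSimplex k)))
    (hbound : ∀ θ ∈ openSimplex k, |π θ| ≤ B) (hcont : ContinuousWithinAt π (openSimplex k) r)
    (hl : l ≤ atTop) (hcount : ∀ᶠ n in l, RoundsToCount k n r) :
    Tendsto (fun n => mStar k π n r) l (𝓝 (π r)) := by
  have htotal : ∀ᶠ n : ℕ in l, (n : ℝ) = ∑ i, (roundCount k n r i : ℝ) +
      (n - ∑ i, roundCount k n r i : ℕ) := by
    filter_upwards [hcount] with n hn
    exact_mod_cast (Nat.add_sub_cancel' hn.2).symm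
  have hposterior := tendsto_integral_dirichletDensity_smul
    ((tendsto_natCast_atTop_atTop.mono_left hl).congr' htotal)
    (fun i => (tendsto_roundCount_div hl (hcount.mono fun n hn => hn.1 i)).congr'
      (htotal.mono fun n hn => congrArg _ hn)) hmeas hbound hcont
  have hproduct := ((tendsto_pow_mul_factorial_div_factorial_add k).mono_left hl).mul hposterior
  rw [one_mul] at hproduct
  exact hproduct.congr' (hcount.mono fun n hn => (mStar_of_roundsToCount hn).symm)

end Rounding

theorem stmt_16_general {k : ℕ} {B : ℝ} {π : (Fin k → ℝ) → ℝ} {r : Fin k → ℝ}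
    (hmeas : AEStronglyMeasurable π (volume.restrict (openSimplex k)))
    (hbound : ∀ θ ∈ openSimplex k, |π θ| ≤ B) (hsupp : r ∉ openSimplex k → π r = 0)
    (hcont : ContinuousWithinAt π (openSimplex k) r) :
    Tendsto (fun n : ℕ => mStar k π n r) atTop (𝓝 (π r)) := by
  by_cases hr : r ∈ openSimplex k
  · exact tendsto_mStar_of_eventually_roundsToCount hmeas hbound hcont le_rfl
      (eventually_roundsToCount hr)
  · have hinvalid : ∀ n ∉ {n | RoundsToCount k n r}, mStar k π n r = π r := fun n hn =>
      (mStar_of_not_roundsToCount hn).trans (hsupp hr).symm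
    rw [← tendsto_inf_principal_nhds_iff_of_forall_eq hinvalid]
    exact tendsto_mStar_of_eventually_roundsToCount hmeas hbound hcont inf_le_left
      (mem_inf_of_right (mem_principal_self _))

/-- If the prior density `π` on `Θ_k` is bounded above and continuous almost everywhere,
then `m_n* → π` almost everywhere with respect to Lebesgue measure. -/
theorem stmt_16 (k : ℕ) (B : ℝ) (π : (Fin k → ℝ) → ℝ)
    (hmeas : Measurable π) (hπ0 : ∀ θ, 0 ≤ π θ) (hπB : ∀ θ, π θ ≤ B)
    (hsupp : ∀ θ, θ ∉ openSimplex k → π θ = 0)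
    (hint : ∫ θ in openSimplex k, π θ = 1)
    (hcont : ∀ᵐ θ ∂(volume : Measure (Fin k → ℝ)), ContinuousAt π θ) :
    ∀ᵐ r ∂(volume : Measure (Fin k → ℝ)),
      Tendsto (fun n : ℕ => mStar k π n r) atTop (𝓝 (π r)) := by
  filter_upwards [hcont] with r hr using stmt_16_general hmeas.aestronglyMeasurable
    (fun θ _ => (abs_of_nonneg (hπ0 θ)).trans_le (hπB θ)) (hsupp r) hr.continuousWithinAt
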